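/- For any step h ∈ [H] and any nonnegative weights {w_k}_{k=1}^K, the trajectory of Algorithm 1 satisfies Σ_{k=1}^K w_k·γ_h^k ≤ 20√(H²ι)·(1+1/H)·√(‖w‖_∞ · SABH · ‖w‖₁), where γ_h^k = 2√(H²ι/ň_h^k), ‖w‖_∞ = max_{1≤k≤K} w_k, and ‖w‖₁ = Σ_{k=1}^K w_k. (Terms with ň_h^k = 0 are excluded.) -/

import Mathlib

open Finset MeasureTheory

namespace ZSMG

/-! ## Stage structure of the stage-based algorithm -/

/-- Stage lengths (`0`-indexed): `stageLen H 0 = e₁ = H` and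
`stageLen H (i+1) = ⌊(1 + 1/H) * stageLen H i⌋`. -/
def stageLen (H : ℕ) : ℕ → ℕ
  | 0 => H
  | i + 1 => stageLen H i + stageLen H i / H

/-- Total number of visits contained in the first `m` stages. -/
def stageEnd (H m : ℕ) : ℕ := ∑ i ∈ Finset.range m, stageLen H i

/-- `n` is the ending index of some stage (the set `𝓛` of the paper). -/
def IsStageEnd (H n : ℕ) : Prop := ∃ m : ℕ, n = stageEnd H (m + 1)

/-- Index (0-based) of the stage containing the `(n+1)`-st visit,
where `n` is the number of previous visits. -/
noncomputable def curStage (H n : ℕ) : ℕ := sInf {m | n < stageEnd H (m + 1)}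

/-- `ň`: the number of visits in the stage immediately preceding the current stage. -/
noncomputable def checkCnt (H n : ℕ) : ℕ :=
  if curStage H n = 0 then 0 else stageLen H (curStage H n - 1)

/-- `n`: the number of visits in all completed stages. -/
noncomputable def globCnt (H n : ℕ) : ℕ := stageEnd H (curStage H n)

/-- a probability vector on the finite type `α`. -/
def IsProbVec {α : Type*} [Fintype α] (p : α → ℝ) : Prop :=
  (∀ i, 0 ≤ p i) ∧ ∑ i, p i = 1

/-! ## Visit counting along a trajectory -/

section Counts

variable {S A B : Type*} [DecidableEq S] [DecidableEq A] [DecidableEq B]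

/-- `N_h^k(s,a,b)`: the number of visits to `y = (s,a,b)` at step `h`
before episode `k`. -/
def Nvis (x : ℕ → ℕ → S × A × B) (h k : ℕ) (y : S × A × B) : ℕ :=
  ((Finset.Ico 1 k).filter fun j => x j h = y).card

/-- `n_h^k(s)`: the number of visits to the state `s` at step `h` before episode `k`. -/
def NvisS {σ : Type*} [DecidableEq σ] (st : ℕ → ℕ → σ) (h k : ℕ) (s : σ) : ℕ :=
  ((Finset.Ico 1 k).filter fun j => st j h = s).card

/-- the episode of the `i`-th (1-based) visit to `y` at step `h`. -/
noncomputable def visitEp (x : ℕ → ℕ → S × A × B) (h : ℕ) (y : S × A × B) (i : ℕ) : ℕ :=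
  sInf {j | x j h = y ∧ Nvis x h j y = i - 1}

/-- `n_h^k` for the triple visited at step `h` of episode `k`. -/
noncomputable def nGlob (x : ℕ → ℕ → S × A × B) (H h k : ℕ) : ℕ :=
  globCnt H (Nvis x h k (x k h))

/-- `ň_h^k` for the triple visited at step `h` of episode `k`. -/
noncomputable def nCheck (x : ℕ → ℕ → S × A × B) (H h k : ℕ) : ℕ :=
  checkCnt H (Nvis x h k (x k h))

/-- `ℓ_{h,i}^k`: the episode of the `i`-th visit (among all episodes) to the triple
visited at step `h` of episode `k`. -/
noncomputable def ell (x : ℕ → ℕ → S × A × B) (h k i : ℕ) : ℕ := visitEp x h (x k h) i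

/-- `ℓ̌_{h,i}^k` relative to an arbitrary triple `y`. -/
noncomputable def ellCheckAt (x : ℕ → ℕ → S × A × B) (H h k : ℕ) (y : S × A × B) (i : ℕ) : ℕ :=
  visitEp x h y (stageEnd H (curStage H (Nvis x h k y) - 1) + i)

/-- `ℓ̌_{h,i}^k`: the episode of the `i`-th visit, in the stage immediately preceding the
current stage, to the triple visited at step `h` of episode `k`. -/
noncomputable def ellCheck (x : ℕ → ℕ → S × A × B) (H h k i : ℕ) : ℕ :=
  ellCheckAt x H h k (x k h) i

end Counts

/-! ## Values of Markov games -/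

section Game

variable {S A B : Type*} [Fintype S] [Fintype A] [Fintype B]

/-- `Pm h s a b` is a transition probability vector for every `(h,s,a,b)`. -/
def IsTransKernel (Pm : ℕ → S → A → B → S → ℝ) : Prop := ∀ h s a b, IsProbVec (Pm h s a b)

/-- `𝕍(p, f) = pᵀ (f²) - (pᵀ f)²`. -/
def Vvar (p f : S → ℝ) : ℝ := (∑ s, p s * f s ^ 2) - (∑ s, p s * f s) ^ 2

/-- `(P_h f)(s,a,b) = E_{s' ~ P_h(·|s,a,b)} [f s']`. -/
def Pexp (Pm : ℕ → S → A → B → S → ℝ) (h : ℕ) (s : S) (a : A) (b : B) (f : S → ℝ) : ℝ :=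
  ∑ s', Pm h s a b s' * f s'

/-- coarse correlated equilibrium of the pair of matrices `(Qu, Ql)`. -/
def IsCCE (pi Qu Ql : A → B → ℝ) : Prop :=
  IsProbVec (fun ab : A × B => pi ab.1 ab.2) ∧
  (∀ a' : A, ∑ a, ∑ b, pi a b * Qu a' b ≤ ∑ a, ∑ b, pi a b * Qu a b) ∧
  (∀ b' : B, ∑ a, ∑ b, pi a b * Ql a b ≤ ∑ a, ∑ b, pi a b * Ql a b')

/-- value of the correlated Markov policy `pol` with `t` steps remaining
(so at step `H - t + 1`). -/
noncomputable def VpiAux (H : ℕ) (Pm : ℕ → S → A → B → S → ℝ) (r : ℕ → S → A → B → ℝ)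
    (pol : ℕ → S → A → B → ℝ) : ℕ → S → ℝ
  | 0, _ => 0
  | t + 1, s => ∑ a, ∑ b, pol (H - t) s a b *
      (r (H - t) s a b + ∑ s', Pm (H - t) s a b s' * VpiAux H Pm r pol t s')

/-- `V_h^π(s)` for a correlated Markov policy `π`. -/
noncomputable def Vpi (H : ℕ) (Pm : ℕ → S → A → B → S → ℝ) (r : ℕ → S → A → B → ℝ)
    (pol : ℕ → S → A → B → ℝ) (h : ℕ) (s : S) : ℝ := VpiAux H Pm r pol (H + 1 - h) s

/-- `Q_h^π(s,a,b)` for a correlated Markov policy `π`. -/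
noncomputable def Qpi (H : ℕ) (Pm : ℕ → S → A → B → S → ℝ) (r : ℕ → S → A → B → ℝ)
    (pol : ℕ → S → A → B → ℝ) (h : ℕ) (s : S) (a : A) (b : B) : ℝ :=
  r h s a b + ∑ s', Pm h s a b s' * Vpi H Pm r pol (h + 1) s'

/-- Nash value with `t` steps remaining. -/
noncomputable def VstarAux (H : ℕ) (Pm : ℕ → S → A → B → S → ℝ)
    (r : ℕ → S → A → B → ℝ) : ℕ → S → ℝ
  | 0, _ => 0
  | t + 1, s =>
      ⨆ p ∈ {p : A → ℝ | IsProbVec p}, ⨅ q ∈ {q : B → ℝ | IsProbVec q},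
        ∑ a, ∑ b, p a * q b *
          (r (H - t) s a b + ∑ s', Pm (H - t) s a b s' * VstarAux H Pm r t s')

/-- `V_h^*`: the Nash equilibrium value function. -/
noncomputable def Vstar (H : ℕ) (Pm : ℕ → S → A → B → S → ℝ) (r : ℕ → S → A → B → ℝ)
    (h : ℕ) (s : S) : ℝ := VstarAux H Pm r (H + 1 - h) s

/-- `Q_h^*`: the Nash equilibrium action-value function. -/
noncomputable def Qstar (H : ℕ) (Pm : ℕ → S → A → B → S → ℝ) (r : ℕ → S → A → B → ℝ)
    (h : ℕ) (s : S) (a : A) (b : B) : ℝ :=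
  r h s a b + ∑ s', Pm h s a b s' * Vstar H Pm r (h + 1) s'

/-- value of a pair of general (history-dependent) policies, with `t` steps remaining;
the history is the reversed list of the previously visited `(s,a,b)` triples. -/
noncomputable def VgenAux (H : ℕ) (Pm : ℕ → S → A → B → S → ℝ) (r : ℕ → S → A → B → ℝ)
    (mu : List (S × A × B) → S → A → ℝ) (nu : List (S × A × B) → S → B → ℝ) :
    ℕ → List (S × A × B) → S → ℝ
  | 0, _, _ => 0
  | t + 1, hist, s => ∑ a, ∑ b, mu hist s a * nu hist s b *
      (r (H - t) s a b + ∑ s', Pm (H - t) s a b s' * VgenAux H Pm r mu nu t ((s, a, b) :: hist) s')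

/-- `V₁^{μ,ν}(s)` for general policies `μ, ν`. -/
noncomputable def Vgen (H : ℕ) (Pm : ℕ → S → A → B → S → ℝ) (r : ℕ → S → A → B → ℝ)
    (mu : List (S × A × B) → S → A → ℝ) (nu : List (S × A × B) → S → B → ℝ) (s : S) : ℝ :=
  VgenAux H Pm r mu nu H [] s

/-- `V₁^{†,ν}(s) = sup_μ V₁^{μ,ν}(s)`: value of the best response against `ν`. -/
noncomputable def VdagNu (H : ℕ) (Pm : ℕ → S → A → B → S → ℝ) (r : ℕ → S → A → B → ℝ)
    (nu : List (S × A × B) → S → B → ℝ) (s : S) : ℝ :=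
  ⨆ mu ∈ {mu : List (S × A × B) → S → A → ℝ | ∀ hist s', IsProbVec (mu hist s')},
    Vgen H Pm r mu nu s

/-- `V₁^{μ,†}(s) = inf_ν V₁^{μ,ν}(s)`: value of `μ` against its best response. -/
noncomputable def VmuDag (H : ℕ) (Pm : ℕ → S → A → B → S → ℝ) (r : ℕ → S → A → B → ℝ)
    (mu : List (S × A × B) → S → A → ℝ) (s : S) : ℝ :=
  ⨅ nu ∈ {nu : List (S × A × B) → S → B → ℝ | ∀ hist s', IsProbVec (nu hist s')},
    Vgen H Pm r mu nu s

end Game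

/-! ## The certified policies of Algorithm 2 -/

section Certified

variable {S A B : Type*} [Fintype S] [Fintype A] [Fintype B]
  [DecidableEq S] [DecidableEq A] [DecidableEq B]

/-- Weight placed on episode `k` by the certified-policy construction after observing the
(reversed) history `hist`; `g k h y` is the probability that the policy of episode `k`
takes the relevant player's own action of `y` at step `h`. -/
noncomputable def certW (x : ℕ → ℕ → S × A × B) (H K : ℕ) (g : ℕ → ℕ → S × A × B → ℝ) :
    List (S × A × B) → ℕ → ℝ
  | [], k => if k ∈ Finset.Icc 1 K then (K : ℝ)⁻¹ else 0
  | y :: hist, k' =>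
      (∑ k ∈ Finset.Icc 1 K, certW x H K g hist k * g k (hist.length + 1) y *
          (Nvis x (hist.length + 1) k y : ℝ)⁻¹ *
          (((Finset.Icc 1 (Nvis x (hist.length + 1) k y)).filter
              fun j => ellCheckAt x H (hist.length + 1) k y j = k').card : ℝ)) /
        ∑ k ∈ Finset.Icc 1 K, certW x H K g hist k * g k (hist.length + 1) y

/-- `μ^out`: the certified policy of the max-player (Algorithm 2), as a general policy. -/
noncomputable def certMax (x : ℕ → ℕ → S × A × B) (H K : ℕ)
    (pol : ℕ → ℕ → S → A → B → ℝ) : List (S × A × B) → S → A → ℝ := fun hist s a =>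
  ∑ k ∈ Finset.Icc 1 K,
    certW x H K (fun k' h' y => ∑ b, pol k' h' y.1 y.2.1 b) hist k *
      ∑ b, pol k (hist.length + 1) s a b

/-- `ν^out`: the certified policy of the min-player, as a general policy. -/
noncomputable def certMin (x : ℕ → ℕ → S × A × B) (H K : ℕ)
    (pol : ℕ → ℕ → S → A → B → ℝ) : List (S × A × B) → S → B → ℝ := fun hist s b =>
  ∑ k ∈ Finset.Icc 1 K,
    certW x H K (fun k' h' y => ∑ a, pol k' h' y.1 a y.2.2) hist k *
      ∑ a, pol k (hist.length + 1) s a b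

end Certified

/-! ## Data describing one run of Algorithm 1 -/

/-- All quantities maintained by Algorithm 1 along one run: the trajectory
`(s_h^k, a_h^k, b_h^k)`, the CCE policies `π_h^k`, and the optimistic/pessimistic
(action-)value and reference value functions, each indexed by
(episode, step); the value at episode `k` is the value at the *beginning* of episode `k`. -/
structure RunData (S A B : Type*) where
  st : ℕ → ℕ → S
  aa : ℕ → ℕ → A
  bb : ℕ → ℕ → B
  pol : ℕ → ℕ → S → A → B → ℝ
  Qup : ℕ → ℕ → S → A → B → ℝ
  Qlo : ℕ → ℕ → S → A → B → ℝ
  Vup : ℕ → ℕ → S → ℝ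
  Vlo : ℕ → ℕ → S → ℝ
  VrefUp : ℕ → ℕ → S → ℝ
  VrefLo : ℕ → ℕ → S → ℝ

namespace RunData

variable {S A B : Type*} [DecidableEq S] [DecidableEq A] [DecidableEq B] (R : RunData S A B)

/-- the trajectory of visited triples. -/
def x : ℕ → ℕ → S × A × B := fun k h => (R.st k h, R.aa k h, R.bb k h)

/-- `n_h^k`. -/
noncomputable def n (H h k : ℕ) : ℕ := nGlob R.x H h k

/-- `ň_h^k`. -/
noncomputable def nchk (H h k : ℕ) : ℕ := nCheck R.x H h k

/-- `ℓ_{h,i}^k`. -/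
noncomputable def L (h k i : ℕ) : ℕ := ell R.x h k i

/-- `ℓ̌_{h,i}^k`. -/
noncomputable def Lc (H h k i : ℕ) : ℕ := ellCheck R.x H h k i

/-- `v̌/ň` for the optimistic values. -/
noncomputable def vChkUp (H h k : ℕ) : ℝ :=
  (∑ i ∈ Finset.Icc 1 (R.nchk H h k),
    R.Vup (R.Lc H h k i) (h + 1) (R.st (R.Lc H h k i) (h + 1))) / (R.nchk H h k : ℝ)

/-- `v̌/ň` for the pessimistic values. -/
noncomputable def vChkLo (H h k : ℕ) : ℝ :=
  (∑ i ∈ Finset.Icc 1 (R.nchk H h k),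
    R.Vlo (R.Lc H h k i) (h + 1) (R.st (R.Lc H h k i) (h + 1))) / (R.nchk H h k : ℝ)

/-- `μ̄^ref/n`. -/
noncomputable def refMeanUp (H h k : ℕ) : ℝ :=
  (∑ i ∈ Finset.Icc 1 (R.n H h k),
    R.VrefUp (R.L h k i) (h + 1) (R.st (R.L h k i) (h + 1))) / (R.n H h k : ℝ)

/-- `μ̲^ref/n`. -/
noncomputable def refMeanLo (H h k : ℕ) : ℝ :=
  (∑ i ∈ Finset.Icc 1 (R.n H h k),
    R.VrefLo (R.L h k i) (h + 1) (R.st (R.L h k i) (h + 1))) / (R.n H h k : ℝ)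

/-- `ν̄^{ref} = σ̄^{ref}/n - (μ̄^{ref}/n)²`. -/
noncomputable def nuRefUp (H h k : ℕ) : ℝ :=
  (∑ i ∈ Finset.Icc 1 (R.n H h k),
    R.VrefUp (R.L h k i) (h + 1) (R.st (R.L h k i) (h + 1)) ^ 2) / (R.n H h k : ℝ)
    - R.refMeanUp H h k ^ 2

/-- `ν̲^{ref} = σ̲^{ref}/n - (μ̲^{ref}/n)²`. -/
noncomputable def nuRefLo (H h k : ℕ) : ℝ :=
  (∑ i ∈ Finset.Icc 1 (R.n H h k),
    R.VrefLo (R.L h k i) (h + 1) (R.st (R.L h k i) (h + 1)) ^ 2) / (R.n H h k : ℝ)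
    - R.refMeanLo H h k ^ 2

/-- `μ̌̄/ň`: mean of the optimistic advantages over the previous stage. -/
noncomputable def advMeanUp (H h k : ℕ) : ℝ :=
  (∑ i ∈ Finset.Icc 1 (R.nchk H h k),
    (R.Vup (R.Lc H h k i) (h + 1) (R.st (R.Lc H h k i) (h + 1)) -
     R.VrefUp (R.Lc H h k i) (h + 1) (R.st (R.Lc H h k i) (h + 1)))) / (R.nchk H h k : ℝ)

/-- `μ̲̌/ň`: mean of the pessimistic advantages over the previous stage. -/
noncomputable def advMeanLo (H h k : ℕ) : ℝ :=
  (∑ i ∈ Finset.Icc 1 (R.nchk H h k),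
    (R.Vlo (R.Lc H h k i) (h + 1) (R.st (R.Lc H h k i) (h + 1)) -
     R.VrefLo (R.Lc H h k i) (h + 1) (R.st (R.Lc H h k i) (h + 1)))) / (R.nchk H h k : ℝ)

/-- `ν̌̄ = σ̌̄/ň - (μ̌̄/ň)²`. -/
noncomputable def nuChkUp (H h k : ℕ) : ℝ :=
  (∑ i ∈ Finset.Icc 1 (R.nchk H h k),
    (R.Vup (R.Lc H h k i) (h + 1) (R.st (R.Lc H h k i) (h + 1)) -
     R.VrefUp (R.Lc H h k i) (h + 1) (R.st (R.Lc H h k i) (h + 1))) ^ 2) / (R.nchk H h k : ℝ)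
    - R.advMeanUp H h k ^ 2

/-- `ν̲̌ = σ̲̌/ň - (μ̲̌/ň)²`. -/
noncomputable def nuChkLo (H h k : ℕ) : ℝ :=
  (∑ i ∈ Finset.Icc 1 (R.nchk H h k),
    (R.Vlo (R.Lc H h k i) (h + 1) (R.st (R.Lc H h k i) (h + 1)) -
     R.VrefLo (R.Lc H h k i) (h + 1) (R.st (R.Lc H h k i) (h + 1))) ^ 2) / (R.nchk H h k : ℝ)
    - R.advMeanLo H h k ^ 2

/-- the Hoeffding-type bonus `γ = 2√(H²ι/ň)`. -/
noncomputable def gammaB (H : ℕ) (iota : ℝ) (h k : ℕ) : ℝ :=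
  2 * Real.sqrt ((H : ℝ) ^ 2 * iota / (R.nchk H h k : ℝ))

/-- the optimistic variance-based bonus `β̄`. -/
noncomputable def betaUp (H : ℕ) (iota c1 c2 c3 : ℝ) (h k : ℕ) : ℝ :=
  c1 * Real.sqrt (R.nuRefUp H h k * iota / (R.n H h k : ℝ)) +
  c2 * Real.sqrt (R.nuChkUp H h k * iota / (R.nchk H h k : ℝ)) +
  c3 * ((H : ℝ) * iota / (R.n H h k : ℝ) + (H : ℝ) * iota / (R.nchk H h k : ℝ) +
    (H : ℝ) * iota ^ (3 / 4 : ℝ) / (R.n H h k : ℝ) ^ (3 / 4 : ℝ) +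
    (H : ℝ) * iota ^ (3 / 4 : ℝ) / (R.nchk H h k : ℝ) ^ (3 / 4 : ℝ))

/-- the pessimistic variance-based bonus `β̲`. -/
noncomputable def betaLo (H : ℕ) (iota c1 c2 c3 : ℝ) (h k : ℕ) : ℝ :=
  c1 * Real.sqrt (R.nuRefLo H h k * iota / (R.n H h k : ℝ)) +
  c2 * Real.sqrt (R.nuChkLo H h k * iota / (R.nchk H h k : ℝ)) +
  c3 * ((H : ℝ) * iota / (R.n H h k : ℝ) + (H : ℝ) * iota / (R.nchk H h k : ℝ) +
    (H : ℝ) * iota ^ (3 / 4 : ℝ) / (R.n H h k : ℝ) ^ (3 / 4 : ℝ) +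
    (H : ℝ) * iota ^ (3 / 4 : ℝ) / (R.nchk H h k : ℝ) ^ (3 / 4 : ℝ))

section WithFintype

variable [Fintype S] [Fintype A] [Fintype B]

/-- `ψ_{h+1}^k`. -/
noncomputable def psiTerm (Pm : ℕ → S → A → B → S → ℝ) (H K h k : ℕ) : ℝ :=
  Pexp Pm h (R.st k h) (R.aa k h) (R.bb k h) fun s' =>
    (∑ i ∈ Finset.Icc 1 (R.n H h k),
        (R.VrefUp (R.L h k i) (h + 1) s' - R.VrefLo (R.L h k i) (h + 1) s')) / (R.n H h k : ℝ) -
      (R.VrefUp (K + 1) (h + 1) s' - R.VrefLo (K + 1) (h + 1) s')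

/-- `ξ_{h+1}^k`. -/
noncomputable def xiTerm (Pm : ℕ → S → A → B → S → ℝ) (H h k : ℕ) : ℝ :=
  (∑ i ∈ Finset.Icc 1 (R.nchk H h k),
      (Pexp Pm h (R.st k h) (R.aa k h) (R.bb k h)
          (fun s' => R.Vup (R.Lc H h k i) (h + 1) s' - R.Vlo (R.Lc H h k i) (h + 1) s') -
        (R.Vup (R.Lc H h k i) (h + 1) (R.st (R.Lc H h k i) (h + 1)) -
          R.Vlo (R.Lc H h k i) (h + 1) (R.st (R.Lc H h k i) (h + 1))))) / (R.nchk H h k : ℝ)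

/-- `Λ_{h+1}^k = ψ_{h+1}^k + ξ_{h+1}^k + 2β̄_h^k + 2β̲_h^k`. -/
noncomputable def lamTerm (Pm : ℕ → S → A → B → S → ℝ) (H K : ℕ) (iota c1 c2 c3 : ℝ)
    (h k : ℕ) : ℝ :=
  R.psiTerm Pm H K h k + R.xiTerm Pm H h k +
    2 * R.betaUp H iota c1 c2 c3 h k + 2 * R.betaLo H iota c1 c2 c3 h k

/-- `R` is a run of Algorithm 1 (with parameters `H K r ι c₁ c₂ c₃ N₀`): initialization,
stage-end update rules for the optimistic and pessimistic action-value functions, CCE policy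
and value updates, and the min-gap reference-value update. -/
def Valid (H K : ℕ) (r : ℕ → S → A → B → ℝ) (iota c1 c2 c3 : ℝ) (N0 : ℕ) : Prop :=
  (∀ h, 1 ≤ h → h ≤ H → ∀ s a b,
      R.Qup 1 h s a b = (H : ℝ) - h + 1 ∧ R.Qlo 1 h s a b = 0) ∧
  (∀ h, 1 ≤ h → h ≤ H → ∀ s,
      R.Vup 1 h s = (H : ℝ) - h + 1 ∧ R.Vlo 1 h s = 0 ∧
      R.VrefUp 1 h s = (H : ℝ) ∧ R.VrefLo 1 h s = 0) ∧
  (∀ k s, R.Vup k (H + 1) s = 0 ∧ R.Vlo k (H + 1) s = 0 ∧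
      R.VrefUp k (H + 1) s = 0 ∧ R.VrefLo k (H + 1) s = 0) ∧
  (∀ k h s, IsProbVec fun ab : A × B => R.pol k h s ab.1 ab.2) ∧
  (∀ k, 1 ≤ k → k ≤ K → ∀ h, 1 ≤ h → h ≤ H → ∀ s a b,
    (((s, a, b) = R.x k h ∧ IsStageEnd H (Nvis R.x h (k + 1) (R.x k h))) →
      R.Qup (k + 1) h s a b =
        min (min (r h s a b + R.vChkUp H h k + R.gammaB H iota h k)
              (r h s a b + R.refMeanUp H h k + R.advMeanUp H h k +
                R.betaUp H iota c1 c2 c3 h k))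
          (R.Qup k h s a b) ∧
      R.Qlo (k + 1) h s a b =
        max (max (r h s a b + R.vChkLo H h k - R.gammaB H iota h k)
              (r h s a b + R.refMeanLo H h k + R.advMeanLo H h k -
                R.betaLo H iota c1 c2 c3 h k))
          (R.Qlo k h s a b)) ∧
    (¬((s, a, b) = R.x k h ∧ IsStageEnd H (Nvis R.x h (k + 1) (R.x k h))) →
      R.Qup (k + 1) h s a b = R.Qup k h s a b ∧ R.Qlo (k + 1) h s a b = R.Qlo k h s a b)) ∧
  (∀ k, 1 ≤ k → k ≤ K → ∀ h, 1 ≤ h → h ≤ H → ∀ s,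
    ((s = R.st k h ∧ IsStageEnd H (Nvis R.x h (k + 1) (R.x k h))) →
      IsCCE (fun a b => R.pol (k + 1) h s a b) (fun a b => R.Qup (k + 1) h s a b)
        (fun a b => R.Qlo (k + 1) h s a b) ∧
      R.Vup (k + 1) h s = ∑ a, ∑ b, R.pol (k + 1) h s a b * R.Qup (k + 1) h s a b ∧
      R.Vlo (k + 1) h s = ∑ a, ∑ b, R.pol (k + 1) h s a b * R.Qlo (k + 1) h s a b) ∧
    (¬(s = R.st k h ∧ IsStageEnd H (Nvis R.x h (k + 1) (R.x k h))) →
      R.pol (k + 1) h s = R.pol k h s ∧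
      R.Vup (k + 1) h s = R.Vup k h s ∧ R.Vlo (k + 1) h s = R.Vlo k h s)) ∧
  (∀ k, 1 ≤ k → k ≤ K → ∀ h, 1 ≤ h → h ≤ H → ∀ s,
    ((s = R.st k h ∧ NvisS R.st h (k + 1) s = N0) →
      ∃ j, 1 ≤ j ∧ j ≤ k + 1 ∧
        R.VrefUp (k + 1) h s = R.Vup j h s ∧ R.VrefLo (k + 1) h s = R.Vlo j h s ∧
        ∀ j', 1 ≤ j' → j' ≤ k + 1 →
          R.Vup j h s - R.Vlo j h s ≤ R.Vup j' h s - R.Vlo j' h s) ∧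
    (¬(s = R.st k h ∧ NvisS R.st h (k + 1) s = N0) →
      R.VrefUp (k + 1) h s = R.VrefUp k h s ∧ R.VrefLo (k + 1) h s = R.VrefLo k h s))

end WithFintype

end RunData

/-- The probabilistic structure of a run of Algorithm 1 on the Markov game with transition
kernel `Pm`: with respect to the filtration `F` (indexed by the time `(k-1)*(H+1)+h`), the
trajectory is adapted, the next state is sampled from `P_h(·|s_h^k,a_h^k,b_h^k)`, and the
actions are sampled from the CCE policy `π_h^k`. -/
def SampledRun {S A B : Type*} [Fintype S] [Fintype A] [Fintype B]
    [MeasurableSpace S] [MeasurableSpace A] [MeasurableSpace B]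
    {Ω : Type*} [m0 : MeasurableSpace Ω] (P : Measure Ω)
    (H : ℕ) (Pm : ℕ → S → A → B → S → ℝ)
    (Rv : Ω → RunData S A B) (F : Filtration ℕ m0) : Prop :=
  (∀ k h, 1 ≤ k → 1 ≤ h → h ≤ H + 1 →
      @Measurable Ω S (F ((k - 1) * (H + 1) + h)) _ fun ω => (Rv ω).st k h) ∧
  (∀ k h, 1 ≤ k → 1 ≤ h → h ≤ H →
      (@Measurable Ω A (F ((k - 1) * (H + 1) + h)) _ fun ω => (Rv ω).aa k h) ∧
      (@Measurable Ω B (F ((k - 1) * (H + 1) + h)) _ fun ω => (Rv ω).bb k h)) ∧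
  (∀ k h, 1 ≤ k → 1 ≤ h → h ≤ H → ∀ f : S → ℝ,
      (P[(fun ω => f ((Rv ω).st k (h + 1)))|F ((k - 1) * (H + 1) + h)]) =ᵐ[P]
        fun ω => ∑ s', Pm h ((Rv ω).st k h) ((Rv ω).aa k h) ((Rv ω).bb k h) s' * f s') ∧
  (∀ k h, 1 ≤ k → 1 ≤ h → h ≤ H → ∀ f : A → B → ℝ,
      (P[(fun ω => f ((Rv ω).aa k h) ((Rv ω).bb k h))|F ((k - 1) * (H + 1) + h - 1)]) =ᵐ[P]
        fun ω => ∑ a, ∑ b, (Rv ω).pol k h ((Rv ω).st k h) a b * f a b)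


/-! The stage lengths grow by a factor between `1 + 1/(2H)` and `1 + 1/H`. The lower growth rate
makes the first `m` stages together at most `2H` times as long as the next one, and the upper rate
bounds the lengths of later stages in terms of the preceding one: after `n` visits,
`n + 1 ≤ 2H(1 + 1/H)² ň` unless `ň = 0`. This replaces `1/√ň` by a multiple of `1/√(n + 1)`, and
along the visits to one triple the latter is controlled by the weights: if `P` is the weight
accumulated up to and including a visit of weight `w`, then `P ≤ ‖w‖_∞ (n + 1)`, so `w/√(n + 1)`
is at most `√‖w‖_∞ · w/√P ≤ 2√‖w‖_∞ (√P - √(P - w))`, which telescopes. Cauchy–Schwarz then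
collects the triples. -/

section Stages

variable (H : ℕ)

lemma le_stageLen (i : ℕ) : H ≤ stageLen H i := by
  induction i with
  | zero => exact le_rfl
  | succ i ih => exact ih.trans (Nat.le_add_right _ _)

lemma stageLen_succ_le (i : ℕ) : (stageLen H (i + 1) : ℝ) ≤ (1 + 1 / H) * stageLen H i :=
  calc (stageLen H (i + 1) : ℝ) = stageLen H i + (stageLen H i / H : ℕ) := by
        simp only [stageLen, Nat.cast_add]
    _ ≤ stageLen H i + stageLen H i / H := by gcongr; exact Nat.cast_div_le
    _ = (1 + 1 / H) * stageLen H i := by ring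

lemma stageEnd_succ (m : ℕ) : stageEnd H (m + 1) = stageEnd H m + stageLen H m :=
  sum_range_succ _ _

variable {H} (hH : 1 ≤ H)
include hH

lemma le_stageEnd (m : ℕ) : m ≤ stageEnd H m := by
  simpa [stageEnd] using
    card_nsmul_le_sum (range m) (stageLen H) 1 fun i _ => hH.trans (le_stageLen H i)

lemma stageEnd_le (m : ℕ) : stageEnd H m ≤ 2 * H * stageLen H m := by
  induction m with
  | zero => simp [stageEnd]
  | succ m ih =>
    have increment_large : stageLen H m ≤ 2 * H * (stageLen H m / H) := by
      have quotient_pos : 1 ≤ stageLen H m / H := (Nat.one_le_div_iff hH).mpr (le_stageLen H m)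
      have := Nat.lt_mul_div_succ (stageLen H m) hH
      nlinarith
    calc stageEnd H (m + 1) = stageEnd H m + stageLen H m := stageEnd_succ H m
      _ ≤ 2 * H * stageLen H m + 2 * H * (stageLen H m / H) := add_le_add ih increment_large
      _ = 2 * H * stageLen H (m + 1) := by simp only [stageLen, mul_add]

lemma lt_stageEnd_curStage_succ (n : ℕ) : n < stageEnd H (curStage H n + 1) :=
  Nat.sInf_mem (s := {m | n < stageEnd H (m + 1)}) ⟨n, le_stageEnd hH (n + 1)⟩

lemma add_one_le_mul_checkCnt {n : ℕ} (hn : checkCnt H n ≠ 0) :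
    (n : ℝ) + 1 ≤ 2 * H * (1 + 1 / H) ^ 2 * checkCnt H n := by
  have hcur : curStage H n ≠ 0 := fun h0 => hn (if_pos h0)
  obtain ⟨m, hm⟩ := Nat.exists_eq_succ_of_ne_zero hcur
  have hcheck : checkCnt H n = stageLen H m := by simp [checkCnt, hm]
  have hvisits : n + 1 ≤ 2 * H * stageLen H (m + 2) := by
    have := lt_stageEnd_curStage_succ hH n
    rw [hm] at this
    exact Nat.succ_le_of_lt (this.trans_le (stageEnd_le hH (m + 2)))
  calc (n : ℝ) + 1 ≤ 2 * H * stageLen H (m + 2) := mod_cast hvisits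
    _ ≤ 2 * H * ((1 + 1 / H) * ((1 + 1 / H) * stageLen H m)) := by
        gcongr
        exact (stageLen_succ_le H (m + 1)).trans (by gcongr; exact stageLen_succ_le H m)
    _ = 2 * H * (1 + 1 / H) ^ 2 * checkCnt H n := by rw [hcheck]; ring

lemma inv_sqrt_checkCnt_le (n : ℕ) :
    (√(checkCnt H n))⁻¹ ≤ √(2 * H) * (1 + 1 / H) / √(n + 1) := by
  rcases eq_or_ne (checkCnt H n) 0 with hn | hn
  · rw [hn, Nat.cast_zero, Real.sqrt_zero, inv_zero]
    positivity
  have : (0 : ℝ) < checkCnt H n := mod_cast Nat.pos_of_ne_zero hn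
  have hsqrt : √(n + 1) ≤ √(2 * H) * (1 + 1 / H) * √(checkCnt H n) :=
    calc √((n : ℝ) + 1) ≤ √(2 * H * (1 + 1 / H) ^ 2 * checkCnt H n) :=
          Real.sqrt_le_sqrt (add_one_le_mul_checkCnt hH hn)
      _ = √(2 * H) * (1 + 1 / H) * √(checkCnt H n) := by
          rw [Real.sqrt_mul (by positivity), Real.sqrt_mul (by positivity),
            Real.sqrt_sq (by positivity)]
  rwa [le_div_iff₀ (by positivity), inv_mul_le_iff₀ (by positivity), mul_comm]

end Stages

section RankSums

lemma sub_div_sqrt_le {a b : ℝ} (ha : 0 ≤ a) (hab : a ≤ b) : (b - a) / √b ≤ 2 * (√b - √a) := by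
  refine div_le_of_le_mul₀ b.sqrt_nonneg (by linarith [Real.sqrt_le_sqrt hab]) ?_
  calc b - a = (√b - √a) * (√b + √a) := by
        rw [mul_comm, ← sq_sub_sq, Real.sq_sqrt (ha.trans hab), Real.sq_sqrt ha]
    _ ≤ (√b - √a) * (√b + √b) := by
        gcongr
        exact sub_nonneg.mpr (Real.sqrt_le_sqrt hab)
    _ = 2 * (√b - √a) * √b := by ring

lemma div_sqrt_le_mul_sqrt_sub_sqrt {P w M r : ℝ} (hP : 0 ≤ P) (hw : 0 ≤ w) (hM : 0 ≤ M)
    (hle : P + w ≤ M * r) : w / √r ≤ 2 * √M * (√(P + w) - √P) := by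
  rcases hw.eq_or_lt with rfl | hw_pos
  · simp
  have hsqrt : √(P + w) ≤ √M * √r := by
    rw [← Real.sqrt_mul hM]
    exact Real.sqrt_le_sqrt hle
  have hr : 0 < √r := pos_of_mul_pos_right ((Real.sqrt_pos.mpr (by positivity)).trans_le hsqrt)
    M.sqrt_nonneg
  calc w / √r ≤ √M * ((P + w - P) / √(P + w)) := by
        rw [add_sub_cancel_left, ← mul_div_assoc, div_le_div_iff₀ hr (by positivity)]
        nlinarith
    _ ≤ √M * (2 * (√(P + w) - √P)) := by
        gcongr
        exact sub_div_sqrt_le hP (by linarith)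
    _ = 2 * √M * (√(P + w) - √P) := by ring

lemma sum_div_sqrt_rank_le {α : Type*} [LinearOrder α] (s : Finset α) {w : α → ℝ} {M : ℝ}
    (hw : ∀ k ∈ s, 0 ≤ w k) (hM : ∀ k ∈ s, w k ≤ M) :
    ∑ k ∈ s, w k / √(#{j ∈ s | j ≤ k}) ≤ 2 * √M * √(∑ k ∈ s, w k) := by
  induction s using Finset.induction_on_max with
  | empty => simp
  | insert a s hlt ih =>
    rw [forall_mem_insert] at hw hM
    have ha : a ∉ s := fun hmem => (hlt a hmem).false
    have rank_last : #{j ∈ insert a s | j ≤ a} = #s + 1 := by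
      rw [filter_true_of_mem, card_insert_of_notMem ha]
      exact (forall_mem_insert ..).mpr ⟨le_rfl, fun j hj => (hlt j hj).le⟩
    have rank_old : ∀ k ∈ s, #{j ∈ insert a s | j ≤ k} = #{j ∈ s | j ≤ k} := fun k hk => by
      rw [filter_insert, if_neg (hlt k hk).not_ge]
    have weight_le : ∑ k ∈ s, w k + w a ≤ M * (#s + 1 : ℕ) := by
      have := sum_le_card_nsmul s w M hM.2
      rw [nsmul_eq_mul] at this
      push_cast
      linarith [hM.1]
    rw [sum_insert ha, sum_insert ha, rank_last, sum_congr rfl fun k hk => by rw [rank_old k hk],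
      add_comm (w a)]
    have last_le := div_sqrt_le_mul_sqrt_sub_sqrt (sum_nonneg hw.2) hw.1 (hw.1.trans hM.1) weight_le
    linarith [ih hw.2 hM.2]

end RankSums

section Visits

variable {S A B : Type*} [DecidableEq S] [DecidableEq A] [DecidableEq B]
  (x : ℕ → ℕ → S × A × B) (h : ℕ) {K : ℕ}

lemma Nvis_add_one_eq_rank {k : ℕ} (hk : k ∈ Icc 1 K) :
    Nvis x h k (x k h) + 1 = #{j ∈ {j ∈ Icc 1 K | x j h = x k h} | j ≤ k} := by
  have hset : {j ∈ {j ∈ Icc 1 K | x j h = x k h} | j ≤ k} =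
      insert k {j ∈ Ico 1 k | x j h = x k h} := by
    ext j
    simp only [mem_filter, mem_insert, mem_Icc, mem_Ico] at hk ⊢
    grind
  rw [hset, card_insert_of_notMem (by simp), Nvis]

variable {w : ℕ → ℝ} {M : ℝ} (hw : ∀ k ∈ Icc 1 K, 0 ≤ w k) (hM : ∀ k ∈ Icc 1 K, w k ≤ M)
include hw hM

lemma sum_div_sqrt_Nvis_le_of_triple (y : S × A × B) :
    ∑ k ∈ Icc 1 K with x k h = y, w k / √(Nvis x h k (x k h) + 1) ≤
      2 * √M * √(∑ k ∈ Icc 1 K with x k h = y, w k) := by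
  refine (sum_congr rfl fun k hk => ?_).trans_le <| sum_div_sqrt_rank_le _
    (fun k hk => hw k (mem_filter.mp hk).1) fun k hk => hM k (mem_filter.mp hk).1
  obtain ⟨hkK, rfl⟩ := mem_filter.mp hk
  rw [← Nvis_add_one_eq_rank x h hkK, Nat.cast_add_one]

lemma sum_div_sqrt_Nvis_le :
    ∑ k ∈ Icc 1 K, w k / √(Nvis x h k (x k h) + 1) ≤
      2 * √M * (√(#((Icc 1 K).image (x · h))) * √(∑ k ∈ Icc 1 K, w k)) := by
  set V := (Icc 1 K).image (x · h)
  set W : S × A × B → ℝ := fun y => ∑ k ∈ Icc 1 K with x k h = y, w k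
  have hmaps : ∀ k ∈ Icc 1 K, x k h ∈ V := fun k hk => mem_image_of_mem _ hk
  have hW : ∀ y, 0 ≤ W y := fun y => sum_nonneg fun k hk => hw k (mem_filter.mp hk).1
  have cauchy_schwarz : ∑ y ∈ V, √(W y) ≤ √(#V) * √(∑ y ∈ V, W y) := by
    simpa using Real.sum_sqrt_mul_sqrt_le V (fun _ => zero_le_one) hW
  calc ∑ k ∈ Icc 1 K, w k / √(Nvis x h k (x k h) + 1)
      = ∑ y ∈ V, ∑ k ∈ Icc 1 K with x k h = y, w k / √(Nvis x h k (x k h) + 1) :=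
        (sum_fiberwise_of_maps_to hmaps _).symm
    _ ≤ ∑ y ∈ V, 2 * √M * √(W y) :=
        sum_le_sum fun y _ => sum_div_sqrt_Nvis_le_of_triple x h hw hM y
    _ = 2 * √M * ∑ y ∈ V, √(W y) := (mul_sum ..).symm
    _ ≤ 2 * √M * (√(#V) * √(∑ y ∈ V, W y)) := by gcongr
    _ = 2 * √M * (√(#V) * √(∑ k ∈ Icc 1 K, w k)) := by rw [sum_fiberwise_of_maps_to hmaps]

lemma sum_div_sqrt_nCheck_le {H : ℕ} (hH : 1 ≤ H) :
    ∑ k ∈ Icc 1 K, w k / √(nCheck x H h k) ≤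
      2 * √2 * (1 + 1 / H) * √(M * (#((Icc 1 K).image (x · h)) * H) * ∑ k ∈ Icc 1 K, w k) := by
  calc ∑ k ∈ Icc 1 K, w k / √(nCheck x H h k)
      ≤ ∑ k ∈ Icc 1 K, √(2 * H) * (1 + 1 / H) * (w k / √(Nvis x h k (x k h) + 1)) := by
        refine sum_le_sum fun k hk => ?_
        rw [div_eq_mul_inv, mul_div_left_comm]
        exact mul_le_mul_of_nonneg_left (inv_sqrt_checkCnt_le hH _) (hw k hk)
    _ ≤ √(2 * H) * (1 + 1 / H) *
          (2 * √M * (√(#((Icc 1 K).image (x · h))) * √(∑ k ∈ Icc 1 K, w k))) := by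
        rw [← mul_sum]
        gcongr
        exact sum_div_sqrt_Nvis_le x h hw hM
    _ = _ := by
        rw [Real.sqrt_mul' _ (sum_nonneg hw), Real.sqrt_mul' M (by positivity),
          Real.sqrt_mul zero_le_two, Real.sqrt_mul (Nat.cast_nonneg _)]
        ring

end Visits

theorem statement19_general {S A B : Type*} [DecidableEq S] [DecidableEq A] [DecidableEq B]
    {H K : ℕ} (hH : 1 ≤ H) {ι : ℝ} (hι : 0 ≤ ι) (x : ℕ → ℕ → S × A × B) (h : ℕ)
    {w : ℕ → ℝ} (hw : ∀ k ∈ Icc 1 K, 0 ≤ w k) {M : ℝ} (hM : ∀ k ∈ Icc 1 K, w k ≤ M) :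
    ∑ k ∈ Icc 1 K, w k * (2 * √(H ^ 2 * ι / nCheck x H h k)) ≤
      4 * √2 * √(H ^ 2 * ι) * (1 + 1 / H) *
        √(M * (#((Icc 1 K).image (x · h)) * H) * ∑ k ∈ Icc 1 K, w k) := by
  calc ∑ k ∈ Icc 1 K, w k * (2 * √(H ^ 2 * ι / nCheck x H h k))
      = 2 * √(H ^ 2 * ι) * ∑ k ∈ Icc 1 K, w k / √(nCheck x H h k) := by
        rw [mul_sum]
        refine sum_congr rfl fun k _ => ?_
        rw [Real.sqrt_div (by positivity)]
        ring
    _ ≤ 2 * √(H ^ 2 * ι) * (2 * √2 * (1 + 1 / H) *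
          √(M * (#((Icc 1 K).image (x · h)) * H) * ∑ k ∈ Icc 1 K, w k)) := by
        gcongr
        exact sum_div_sqrt_nCheck_le x h hw hM hH
    _ = _ := by ring

/-- For any step `h ∈ [H]` and nonnegative weights `w₁,…,w_K`, the weighted
sum of the Hoeffding bonuses `γ_h^k = 2√(H²ι/ň_h^k)` along any trajectory of Algorithm 1 is
at most `20 √(H²ι) (1+1/H) √(‖w‖_∞ · SABH · ‖w‖₁)`, with `ι = log(2/δ)`.  (Terms with
`ň_h^k = 0` vanish since `√(H²ι/0) = √0 = 0` in Lean.) -/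
theorem statement19 {S A B : Type*} [Fintype S] [Fintype A] [Fintype B]
    [DecidableEq S] [DecidableEq A] [DecidableEq B]
    (H K : ℕ) (hH : 1 ≤ H) (hK : 1 ≤ K)
    (δ : ℝ) (hδ0 : 0 < δ) (hδ1 : δ < 1)
    (x : ℕ → ℕ → S × A × B)
    (h : ℕ) (hh1 : 1 ≤ h) (hhH : h ≤ H)
    (w : ℕ → ℝ) (hw : ∀ k, 0 ≤ w k) :
    ∑ k ∈ Finset.Icc 1 K,
        w k * (2 * Real.sqrt ((H : ℝ) ^ 2 * Real.log (2 / δ) / (nCheck x H h k : ℝ)))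
      ≤ 20 * Real.sqrt ((H : ℝ) ^ 2 * Real.log (2 / δ)) * (1 + 1 / (H : ℝ)) *
        Real.sqrt
          (((Finset.Icc 1 K).sup' (Finset.nonempty_Icc.mpr hK) w) *
            ((Fintype.card S : ℝ) * (Fintype.card A : ℝ) * (Fintype.card B : ℝ) * (H : ℝ)) *
            ∑ k ∈ Finset.Icc 1 K, w k) := by
  have hM : ∀ k ∈ Icc 1 K, w k ≤ (Icc 1 K).sup' (nonempty_Icc.mpr hK) w := fun k => le_sup' w
  have hM0 := (hw 1).trans (hM 1 (left_mem_Icc.mpr hK))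
  have hι : 0 ≤ Real.log (2 / δ) := Real.log_nonneg ((one_le_div hδ0).mpr (by linarith))
  have hconst : 4 * √2 ≤ 20 := by linarith [Real.sqrt_two_lt_three_halves]
  have hcard : (#((Icc 1 K).image (x · h)) : ℝ) ≤
      Fintype.card S * Fintype.card A * Fintype.card B := by
    rw [mul_assoc]
    exact_mod_cast (card_le_univ _).trans_eq (by simp only [Fintype.card_prod])
  refine (statement19_general hH hι x h (fun k _ => hw k) hM).trans ?_
  gcongr
  exact sum_nonneg fun k _ => hw k

end ZSMG
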